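/- arXiv:1604.08191 — 7 statements merged into one kernel-verified Lean document; each statement's English description precedes it below -/
import Mathlib

section
/- Let C be a finite set of candidates, L an axis (a linear order) on C, and v a weak order on C that is single-peaked with respect to L. Then the most-preferred candidate of v is unique, every indifference class of v contains at most two candidates, and whenever two distinct candidates are tied in v, one lies strictly to the left of the peak of v on L and the other strictly to the right. -/
open scoped Classical

section Defs

variable {C : Type*}

/-- Strict preference: `a` is strictly preferred to `b` in the vote `v`. -/
def SPref (v : C → C → Prop) (a b : C) : Prop := v a b ∧ ¬ v b a

/-- Indifference (a tie) between `a` and `b` in the vote `v`. -/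
def Indiff (v : C → C → Prop) (a b : C) : Prop := v a b ∧ v b a

/-- A weak order: a complete (hence reflexive) and transitive binary relation. -/
def IsWeakOrder (v : C → C → Prop) : Prop := (∀ a b, v a b ∨ v b a) ∧ Transitive v

/-- A total (linear) order: an antisymmetric weak order. -/
def IsTotalOrderRel (v : C → C → Prop) : Prop :=
  IsWeakOrder v ∧ ∀ a b, v a b → v b a → a = b

/-- A top order: a weak order all of whose ties are within the least-preferred
indifference class. -/
def IsTopOrder (v : C → C → Prop) : Prop :=
  IsWeakOrder v ∧ ∀ a b, a ≠ b → Indiff v a b → ∀ c, v c a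

/-- `c` is among the most preferred candidates of `v`. -/
def TopCand (v : C → C → Prop) (c : C) : Prop := ∀ d, v c d

/-- `v` is single-peaked w.r.t. the axis `A`: there is a peak `p` (which is then the
unique most preferred candidate) such that `v` is strictly increasing along the part of
the axis up to `p` and strictly decreasing along the part of the axis after `p`. -/
def IsSinglePeaked (A : LinearOrder C) (v : C → C → Prop) : Prop :=
  ∃ p : C, (∀ a b, A.lt a b → A.le b p → SPref v b a) ∧
           (∀ a b, A.le p a → A.lt a b → SPref v a b)

/-- `v` is single-plateaued w.r.t. the axis `A`: the axis splits into segments `X,Y,Z`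
where the interval `Y = [y₁, y₂]` consists exactly of the most preferred candidates,
`v` is strictly increasing along `X` and strictly decreasing along `Z`. -/
def IsSinglePlateaued (A : LinearOrder C) (v : C → C → Prop) : Prop :=
  ∃ y₁ y₂ : C, A.le y₁ y₂ ∧ (∀ c, (A.le y₁ c ∧ A.le c y₂) ↔ TopCand v c) ∧
    (∀ a b, A.lt a b → A.le b y₁ → SPref v b a) ∧
    (∀ a b, A.le y₂ a → A.lt a b → SPref v a b)

/-- `v` is possibly single-peaked w.r.t. the axis `A`: `v` is weakly increasing along
the axis up to some point `p` and weakly decreasing afterwards (so the most preferred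
candidates form an interval `Y` around `p`). -/
def IsPossiblySinglePeaked (A : LinearOrder C) (v : C → C → Prop) : Prop :=
  ∃ p : C, (∀ a b, A.lt a b → A.le b p → v b a) ∧
           (∀ a b, A.le p a → A.lt a b → v a b)

/-- `v` is single-peaked with outside options w.r.t. the axis `A`: the axis splits into
segments `O₁,X,Y,Z,O₂` where the inner interval `[l,r]` (split into `X`, the peak
`Y = {p}`, and `Z`) is single-peaked, every inner candidate is strictly preferred to
every outside candidate, and all outside candidates are mutually indifferent. -/
def IsSPOutsideOptions (A : LinearOrder C) (v : C → C → Prop) : Prop :=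
  ∃ l p r : C, A.le l p ∧ A.le p r ∧
    (∀ a b, A.le l a → A.lt a b → A.le b p → SPref v b a) ∧
    (∀ a b, A.le p a → A.lt a b → A.le b r → SPref v a b) ∧
    (∀ a b, A.le l a → A.le a r → ¬ (A.le l b ∧ A.le b r) → SPref v a b) ∧
    (∀ a b, ¬ (A.le l a ∧ A.le a r) → ¬ (A.le l b ∧ A.le b r) → Indiff v a b)

/-- The number of candidates strictly preferred to `c` (the `k_i` of `c`'s class). -/
noncomputable def aboveCount [Fintype C] (v : C → C → Prop) (c : C) : ℕ :=
  Nat.card {d : C // SPref v d c}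

/-- The size of `c`'s indifference class (including `c` itself). -/
noncomputable def tiedCount [Fintype C] (v : C → C → Prop) (c : C) : ℕ :=
  Nat.card {d : C // Indiff v d c}

/-- The number of indifference classes strictly below `c`'s class. -/
noncomputable def classesBelow [Fintype C] (v : C → C → Prop) (c : C) : ℕ :=
  Set.ncard ((fun d => aboveCount v d) '' {d : C | SPref v c d})

/-- An `m`-candidate scoring vector, indexed by positions `1..m`: `α 1 ≥ α 2 ≥ ... ≥ α m`. -/
def IsScoringVec (m : ℕ) (α : ℕ → ℕ) : Prop :=
  ∀ i j, 1 ≤ i → i ≤ j → j ≤ m → α j ≤ α i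

/-- The four scoring-rule extensions: min, max, round down, and average. -/
inductive ScoreExt : Type
  | emin | emax | eroundDown | eaverage

/-- The score of candidate `c` in a weak-order vote `v` under the scoring vector `α`
(for `m` candidates) with scoring-rule extension `E`: writing the vote as indifference
classes `G₁ > ... > G_r` and `k_i = |G₁| + ... + |G_{i-1}|`, a candidate in `G_i` scores
`α (k_i + |G_i|)` under min, `α (k_i + 1)` under max, `α (m - r + i)` under round down,
and `(α (k_i + 1) + ... + α (k_i + |G_i|)) / |G_i|` under average. -/
noncomputable def extScore [Fintype C] (m : ℕ) (α : ℕ → ℕ) (E : ScoreExt)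
    (v : C → C → Prop) (c : C) : ℚ :=
  match E with
  | .emin => α (aboveCount v c + tiedCount v c)
  | .emax => α (aboveCount v c + 1)
  | .eroundDown => α (m - classesBelow v c)
  | .eaverage =>
      (∑ j ∈ Finset.Icc (aboveCount v c + 1) (aboveCount v c + tiedCount v c), (α j : ℚ))
        / (tiedCount v c : ℚ)

/-- The total weighted score of candidate `c` for a weighted profile `S`
(a list of weight/vote pairs). -/
noncomputable def profScore [Fintype C] (m : ℕ) (α : ℕ → ℕ) (E : ScoreExt)
    (S : List (ℕ × (C → C → Prop))) (c : C) : ℚ :=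
  (S.map (fun wv => (wv.1 : ℚ) * extScore m α E wv.2 c)).sum

/-- The total weight of the voters in `S` strictly preferring `a` to `b`. -/
noncomputable def prefWeight (S : List (ℕ × (C → C → Prop))) (a b : C) : ℕ :=
  (S.map (fun wv => if SPref wv.2 a b then wv.1 else 0)).sum

end Defs

section SinglePeaked

variable {C : Type*} {v : C → C → Prop} {a b c p : C}

theorem IsWeakOrder.isPreorder (hv : IsWeakOrder v) : IsPreorder C v where
  refl a := (hv.1 a a).elim id id
  trans _ _ _ hab hbc := hv.2 hab hbc

theorem Indiff.trans [IsTrans C v] (hab : Indiff v a b) (hbc : Indiff v b c) : Indiff v a c :=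
  ⟨_root_.trans hab.1 hbc.1, _root_.trans hbc.2 hab.2⟩

variable [LinearOrder C]

/-- `p` is a peak of `v` on the axis given by the order instance on `C`, i.e. a witness for
`IsSinglePeaked`. Naming the witness allows statements about positions relative to it. -/
def IsPeak (v : C → C → Prop) (p : C) : Prop :=
  (∀ a b, a < b → b ≤ p → SPref v b a) ∧ (∀ a b, p ≤ a → a < b → SPref v a b)

namespace IsPeak

theorem sPref_of_ne (hp : IsPeak v p) (ha : a ≠ p) : SPref v p a :=
  ha.lt_or_gt.elim (fun hlt => hp.1 a p hlt le_rfl) (fun hgt => hp.2 p a le_rfl hgt)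

theorem topCand [Std.Refl v] (hp : IsPeak v p) : TopCand v p := fun a => by
  obtain rfl | ha := eq_or_ne a p
  · exact refl a
  · exact (hp.sPref_of_ne ha).1

theorem eq_of_topCand (hp : IsPeak v p) (hc : TopCand v c) : c = p :=
  by_contra fun hne => (hp.sPref_of_ne hne).2 (hc p)

theorem existsUnique_topCand [Std.Refl v] (hp : IsPeak v p) : ∃! c, TopCand v c :=
  ⟨p, hp.topCand, fun _ => hp.eq_of_topCand⟩

theorem lt_and_lt_of_indiff_of_lt (hp : IsPeak v p) (h : Indiff v a b) (hab : a < b) :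
    a < p ∧ p < b :=
  ⟨lt_of_not_ge fun hpa => (hp.2 a b hpa hab).2 h.2,
    lt_of_not_ge fun hbp => (hp.1 a b hab hbp).2 h.1⟩

theorem lt_and_lt_or_of_indiff (hp : IsPeak v p) (h : Indiff v a b) (hab : a ≠ b) :
    (a < p ∧ p < b) ∨ (b < p ∧ p < a) :=
  hab.lt_or_gt.imp (hp.lt_and_lt_of_indiff_of_lt h) (hp.lt_and_lt_of_indiff_of_lt h.symm)

/-- The peak would have to separate each of the three pairs, but it has only two sides. -/
theorem not_indiff_of_indiff [IsTrans C v] (hp : IsPeak v p) (hab : a ≠ b) (hbc : b ≠ c)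
    (hac : a ≠ c) (h : Indiff v a b) : ¬ Indiff v b c := by
  intro h'
  rcases hp.lt_and_lt_or_of_indiff h hab with ⟨ha, hb⟩ | ⟨hb, ha⟩ <;>
    rcases hp.lt_and_lt_or_of_indiff h' hbc with ⟨hb', hc⟩ | ⟨hc, hb'⟩ <;>
    rcases hp.lt_and_lt_or_of_indiff (h.trans h') hac with ⟨ha', hc'⟩ | ⟨hc', ha'⟩ <;>
    order

end IsPeak

end SinglePeaked

theorem singlePeaked_unique_peak_ties_general {C : Type*} (A : LinearOrder C)
    (v : C → C → Prop) [IsPreorder C v] (hsp : IsSinglePeaked A v) :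
    (∃! c : C, TopCand v c) ∧
    (∀ a b c : C, a ≠ b → b ≠ c → a ≠ c →
      Indiff v a b → Indiff v b c → False) ∧
    (∀ pk : C, TopCand v pk → ∀ a b : C, a ≠ b → Indiff v a b →
      (a < pk ∧ pk < b) ∨ (b < pk ∧ pk < a)) := by
  obtain ⟨p, hp⟩ : ∃ p, IsPeak v p := hsp
  refine ⟨hp.existsUnique_topCand, fun a b c => hp.not_indiff_of_indiff, ?_⟩
  intro pk hpk a b hab h
  obtain rfl : pk = p := hp.eq_of_topCand hpk
  exact hp.lt_and_lt_or_of_indiff h hab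

/-- For a weak order `v` on a finite candidate set that is single-peaked
w.r.t. an axis `A`: the most preferred candidate is unique, every indifference class
contains at most two candidates, and any two distinct tied candidates lie strictly on
opposite sides of the peak on the axis. -/
theorem singlePeaked_unique_peak_ties {C : Type*} [Fintype C] (A : LinearOrder C)
    (v : C → C → Prop) (hv : IsWeakOrder v) (hsp : IsSinglePeaked A v) :
    (∃! c : C, TopCand v c) ∧
    (∀ a b c : C, a ≠ b → b ≠ c → a ≠ c →
      Indiff v a b → Indiff v b c → False) ∧
    (∀ pk : C, TopCand v pk → ∀ a b : C, a ≠ b → Indiff v a b →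
      (A.lt a pk ∧ A.lt pk b) ∨ (A.lt b pk ∧ A.lt pk a)) := by
  have := hv.isPreorder
  exact singlePeaked_unique_peak_ties_general A v hsp
end

section
/- Let C be a finite set of candidates, L an axis on C, and v a weak order on C. Then v is possibly single-peaked with respect to L if and only if there exists a total (linear) order v' on C extending v (i.e., a > b in v implies a > b in v') that is single-peaked with respect to L. -/
open scoped Classical

/-!
Break every tie of `v` by one fixed total order `t` that is itself single-peaked with peak `p`.
If `v` weakly prefers `a` to `b` and `t` strictly prefers `a` to `b`, then so does the resulting
order, whether or not `a` and `b` are tied in `v`. Conversely, `v` cannot strictly reverse a strict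
preference of an extension, so by completeness it contains every such preference weakly.
-/

section Extension

variable {C : Type*} {v t : C → C → Prop} {a b : C}

/-- The refinement of `v` in which the ties of `v` are broken according to `t`: the lexicographic
combination of `v` and `t`. -/
def TieBreak (v t : C → C → Prop) (a b : C) : Prop := v a b ∧ (v b a → t a b)

theorem SPref.tieBreak (h : SPref v a b) : SPref (TieBreak v t) a b :=
  ⟨⟨h.1, fun hba => absurd hba h.2⟩, fun hba => h.2 hba.1⟩

theorem SPref.tieBreak_right (ht : SPref t a b) (hv : v a b) : SPref (TieBreak v t) a b :=
  ⟨⟨hv, fun _ => ht.1⟩, fun hba => ht.2 (hba.2 hv)⟩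

theorem IsTotalOrderRel.tieBreak (ht : IsTotalOrderRel t) (hv : IsWeakOrder v) :
    IsTotalOrderRel (TieBreak v t) := by
  obtain ⟨v_total, v_trans⟩ := hv
  obtain ⟨⟨t_total, t_trans⟩, t_antisymm⟩ := ht
  refine ⟨⟨fun a b => ?total, fun a b c hab hbc => ?trans⟩, fun a b hab hba => ?antisymm⟩
  case total =>
    by_cases hab : v a b
    · by_cases hba : v b a
      · exact (t_total a b).imp (fun h => ⟨hab, fun _ => h⟩) (fun h => ⟨hba, fun _ => h⟩)
      · exact .inl ⟨hab, fun h => absurd h hba⟩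
    · exact .inr ⟨(v_total a b).resolve_left hab, fun h => absurd h hab⟩
  case trans =>
    refine ⟨v_trans hab.1 hbc.1, fun hca => ?_⟩
    exact t_trans (hab.2 (v_trans hbc.1 hca)) (hbc.2 (v_trans hca hab.1))
  case antisymm => exact t_antisymm a b (hab.2 hba.1) (hba.2 hab.1)

theorem SPref.of_extension {v' : C → C → Prop} (v_total : ∀ a b, v a b ∨ v b a)
    (hext : ∀ a b, SPref v a b → SPref v' a b) (h : SPref v' a b) : v a b := by
  by_contra hab
  exact h.2 (hext b a ⟨(v_total a b).resolve_left hab, hab⟩).1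

end Extension

section Rank

variable {C α : Type*} [LinearOrder α]

theorem isTotalOrderRel_of_injective {f : C → α} (hf : Function.Injective f) :
    IsTotalOrderRel fun a b => f a ≤ f b :=
  ⟨⟨fun _ _ => le_total _ _, fun _ _ _ => le_trans⟩, fun _ _ hab hba => hf (le_antisymm hab hba)⟩

theorem sPref_le_iff_lt (f : C → α) {a b : C} :
    SPref (fun a b => f a ≤ f b) a b ↔ f a < f b :=
  lt_iff_le_not_ge.symm

end Rank

section Peak

variable {C : Type*} [A : LinearOrder C] {R S : C → C → Prop} {p : C}

variable (A R p) in
/-- The relation `R` prefers candidates nearer to `p` on either side of `p` along the axis `A`.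
With `R = v` this says that `v` is possibly single-peaked with peak `p`, and with `R = SPref v` that
`v` is single-peaked with peak `p`. -/
def IsPeakedAt : Prop :=
  (∀ a b, a < b → b ≤ p → R b a) ∧ (∀ a b, p ≤ a → a < b → R a b)

theorem IsPeakedAt.mono (hR : IsPeakedAt A R p) (hRS : ∀ a b, R a b → S a b) :
    IsPeakedAt A S p :=
  ⟨fun a b hab hbp => hRS b a (hR.1 a b hab hbp), fun a b hpa hab => hRS a b (hR.2 a b hpa hab)⟩

theorem IsPeakedAt.and (hR : IsPeakedAt A R p) (hS : IsPeakedAt A S p) :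
    IsPeakedAt A (fun a b => R a b ∧ S a b) p :=
  ⟨fun a b hab hbp => ⟨hR.1 a b hab hbp, hS.1 a b hab hbp⟩,
    fun a b hpa hab => ⟨hR.2 a b hpa hab, hS.2 a b hpa hab⟩⟩

/-- The rank of a candidate (smaller is better) in a total order with peak `p`: the candidates up
to `p` come first, in decreasing axis order, followed by those after `p` in increasing axis order.
-/
def peakRank (p a : C) : Cᵒᵈ ⊕ₗ C :=
  if a ≤ p then Sum.inlₗ (OrderDual.toDual a) else Sum.inrₗ a

theorem peakRank_injective (p : C) : Function.Injective (peakRank p) := by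
  intro a b h
  by_cases ha : a ≤ p <;> by_cases hb : b ≤ p <;> simp_all [peakRank]

theorem peakRank_lt_of_lt_of_le {a b : C} (hab : a < b) (hbp : b ≤ p) :
    peakRank p b < peakRank p a := by
  simpa [peakRank, hbp, hab.le.trans hbp] using hab

theorem peakRank_lt_of_le_of_lt {a b : C} (hpa : p ≤ a) (hab : a < b) :
    peakRank p a < peakRank p b := by
  have hpb : ¬ b ≤ p := (hpa.trans_lt hab).not_ge
  by_cases hap : a ≤ p <;> simp [peakRank, hap, hpb, hab]

variable (A p) in
theorem exists_isTotalOrderRel_isPeakedAt :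
    ∃ t : C → C → Prop, IsTotalOrderRel t ∧ IsPeakedAt A (SPref t) p :=
  ⟨_, isTotalOrderRel_of_injective (peakRank_injective p),
    fun _ _ hab hbp => (sPref_le_iff_lt _).2 (peakRank_lt_of_lt_of_le hab hbp),
    fun _ _ hpa hab => (sPref_le_iff_lt _).2 (peakRank_lt_of_le_of_lt hpa hab)⟩

end Peak

theorem possiblySinglePeaked_iff_extension_singlePeaked_general
    {C : Type*} (A : LinearOrder C) (v : C → C → Prop) (hv : IsWeakOrder v) :
    IsPossiblySinglePeaked A v ↔
      ∃ v' : C → C → Prop, IsTotalOrderRel v' ∧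
        (∀ a b, SPref v a b → SPref v' a b) ∧ IsSinglePeaked A v' := by
  constructor
  · rintro ⟨p, hp : IsPeakedAt A v p⟩
    obtain ⟨t, t_total, t_peaked⟩ := exists_isTotalOrderRel_isPeakedAt A p
    have peaked : IsPeakedAt A (SPref (TieBreak v t)) p :=
      (hp.and t_peaked).mono fun _ _ h => h.2.tieBreak_right h.1
    exact ⟨TieBreak v t, t_total.tieBreak hv, fun _ _ => SPref.tieBreak, p, peaked⟩
  · rintro ⟨v', -, hext, p, hp : IsPeakedAt A (SPref v') p⟩
    exact ⟨p, hp.mono fun _ _ => SPref.of_extension hv.1 hext⟩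

/-- A weak order `v` on a finite candidate set is possibly single-peaked
w.r.t. an axis `A` if and only if there is a total (linear) order `v'` extending `v`
(every strict preference of `v` is a strict preference of `v'`) that is single-peaked
w.r.t. `A`. -/
theorem possiblySinglePeaked_iff_extension_singlePeaked
    {C : Type*} [Fintype C] (A : LinearOrder C) (v : C → C → Prop)
    (hv : IsWeakOrder v) :
    IsPossiblySinglePeaked A v ↔
      ∃ v' : C → C → Prop, IsTotalOrderRel v' ∧
        (∀ a b, SPref v a b → SPref v' a b) ∧ IsSinglePeaked A v' :=
  possiblySinglePeaked_iff_extension_singlePeaked_general A v hv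
end

section
/- Let C be a finite set of candidates, L an axis on C, and V a finite weighted collection of voters (each with a positive integer weight) whose votes are weak orders on C, each single-plateaued with respect to L. Then the weighted strict majority relation is transitive: for all distinct candidates a, b, c, if the total weight of voters strictly preferring a to b exceeds the total weight strictly preferring b to a, and the total weight strictly preferring b to c exceeds the total weight strictly preferring c to b, then the total weight strictly preferring a to c exceeds the total weight strictly preferring c to a. -/
/-!
In a single-plateaued vote the middle one of three candidates is either strictly preferred to one
of the other two or is on the plateau. Hence a voter strictly preferring an end `x` to the middle
`m` also strictly prefers `x` to the other end `z`, and a voter strictly preferring `z` to `x` also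
strictly prefers `m` to `x`. Both implications become inequalities between total weights, so the
majority relation inherits them, and an asymmetric relation satisfying both is transitive.
-/

open scoped Classical

section Quasiconcave

variable {C : Type*} [LinearOrder C]

/-- Semistrict quasiconcavity along the axis of a strict relation `r`. If `r a b` means
`f b < f a` for a real function `f`, the first condition is the contrapositive of quasiconcavity,
`f x ≤ f z → f x ≤ f m`, and the second is its semistrict version, `f x < f z → f x < f m`. Only the
strict relation occurs, so that the definition applies to majority relations as well as to votes. -/
structure IsSemistrictlyQuasiconcave (r : C → C → Prop) : Prop where
  rel_of_rel_middle : ∀ ⦃x m z⦄, m ∈ Set.uIoo x z → r x m → r x z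
  middle_rel_of_rel : ∀ ⦃x m z⦄, m ∈ Set.uIoo x z → r z x → r m x

lemma mem_uIoo_or_mem_uIoo_or_mem_uIoo_of_ne {a b c : C} (hab : a ≠ b) (hbc : b ≠ c)
    (hac : a ≠ c) : b ∈ Set.uIoo a c ∨ a ∈ Set.uIoo c b ∨ c ∈ Set.uIoo b a := by
  simp only [Set.uIoo, Set.mem_Ioo, inf_lt_iff, lt_sup_iff]
  grind

theorem IsSemistrictlyQuasiconcave.isTrans {r : C → C → Prop} [Std.Asymm r]
    (hr : IsSemistrictlyQuasiconcave r) : IsTrans C r where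
  trans a b c hab hbc := by
    have hac : a ≠ c := by
      rintro rfl
      exact asymm hab hbc
    rcases mem_uIoo_or_mem_uIoo_or_mem_uIoo_of_ne (ne_of_irrefl hab) (ne_of_irrefl hbc) hac
      with hb | ha | hc
    · exact hr.rel_of_rel_middle hb hab
    · exact hr.middle_rel_of_rel ha hbc
    · exact absurd (hr.rel_of_rel_middle hc hbc) (asymm hab)

end Quasiconcave

section Vote

variable {C : Type*} {v : C → C → Prop} {a b c : C}

lemma SPref.trans_rel [IsTrans C v] (hab : SPref v a b) (hbc : v b c) : SPref v a c :=
  ⟨_root_.trans hab.1 hbc, fun hca => hab.2 (_root_.trans hbc hca)⟩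

lemma SPref.rel_trans [IsTrans C v] (hab : v a b) (hbc : SPref v b c) : SPref v a c :=
  ⟨_root_.trans hab hbc.1, fun hca => hbc.2 (_root_.trans hca hab)⟩

lemma IsSinglePlateaued.sPref_or_sPref_or_topCand [A : LinearOrder C] (hv : IsSinglePlateaued A v)
    {x m z : C} (hm : m ∈ Set.uIoo x z) : SPref v m x ∨ SPref v m z ∨ TopCand v m := by
  obtain ⟨y₁, y₂, -, plateau, increasing, decreasing⟩ := hv
  have hmin : x < m ∨ z < m := inf_lt_iff.1 hm.1
  have hmax : m < x ∨ m < z := lt_sup_iff.1 hm.2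
  rcases le_total m y₁ with hm₁ | hm₁
  · exact hmin.imp (increasing x m · hm₁) fun hzm => .inl (increasing z m hzm hm₁)
  rcases le_total y₂ m with hm₂ | hm₂
  · exact hmax.imp (decreasing m x hm₂) fun hmz => .inl (decreasing m z hm₂ hmz)
  exact .inr (.inr ((plateau m).1 ⟨hm₁, hm₂⟩))

theorem IsSinglePlateaued.isSemistrictlyQuasiconcave_sPref [A : LinearOrder C] [IsTrans C v]
    (hv : IsSinglePlateaued A v) : IsSemistrictlyQuasiconcave (SPref v) where
  rel_of_rel_middle x m z hm hxm := by
    rcases hv.sPref_or_sPref_or_topCand hm with hmx | hmz | htop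
    · exact absurd hmx.1 hxm.2
    · exact hxm.trans_rel hmz.1
    · exact absurd (htop x) hxm.2
  middle_rel_of_rel x m z hm hzx := by
    rcases hv.sPref_or_sPref_or_topCand hm with hmx | hmz | htop
    · exact hmx
    · exact hmz.trans_rel hzx.1
    · exact SPref.rel_trans (htop z) hzx

end Vote

section Majority

variable {C : Type*} {V : List (ℕ × (C → C → Prop))}

/-- The weighted strict majority relation of the profile `V`: `a` is strictly preferred to `b` by
voters of larger total weight than those strictly preferring `b` to `a`. -/
def MajorityPref (V : List (ℕ × (C → C → Prop))) (a b : C) : Prop :=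
  prefWeight V b a < prefWeight V a b

instance : Std.Asymm (MajorityPref V) where
  asymm _ _ := lt_asymm

lemma prefWeight_le_prefWeight {a b c d : C}
    (h : ∀ wv ∈ V, SPref wv.2 a b → SPref wv.2 c d) : prefWeight V a b ≤ prefWeight V c d := by
  refine List.sum_le_sum fun wv hwv => ?_
  by_cases hab : SPref wv.2 a b
  · rw [if_pos hab, if_pos (h wv hwv hab)]
  · rw [if_neg hab]
    exact Nat.zero_le _

theorem isSemistrictlyQuasiconcave_majorityPref [LinearOrder C]
    (hV : ∀ wv ∈ V, IsSemistrictlyQuasiconcave (SPref wv.2)) :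
    IsSemistrictlyQuasiconcave (MajorityPref V) := by
  have le_of_middle {x m z : C} (hm : m ∈ Set.uIoo x z) : prefWeight V x m ≤ prefWeight V x z :=
    prefWeight_le_prefWeight fun wv hwv => (hV wv hwv).rel_of_rel_middle hm
  have le_middle {x m z : C} (hm : m ∈ Set.uIoo x z) : prefWeight V z x ≤ prefWeight V m x :=
    prefWeight_le_prefWeight fun wv hwv => (hV wv hwv).middle_rel_of_rel hm
  refine ⟨fun x m z hm hxm => ?_, fun x m z hm hzx => ?_⟩
  · calc prefWeight V z x ≤ prefWeight V m x := le_middle hm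
      _ < prefWeight V x m := hxm
      _ ≤ prefWeight V x z := le_of_middle hm
  · calc prefWeight V x m ≤ prefWeight V x z := le_of_middle hm
      _ < prefWeight V z x := hzx
      _ ≤ prefWeight V m x := le_middle hm

end Majority

theorem singlePlateaued_majority_transitive_general {C : Type*} (A : LinearOrder C)
    (V : List (ℕ × (C → C → Prop)))
    (hV : ∀ wv ∈ V, IsTrans C wv.2 ∧ IsSinglePlateaued A wv.2) :
    IsTrans C (MajorityPref V) :=
  (isSemistrictlyQuasiconcave_majorityPref fun wv hwv =>
    have := (hV wv hwv).1
    (hV wv hwv).2.isSemistrictlyQuasiconcave_sPref).isTrans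

/-- For a finite weighted collection `V` of voters (positive integer
weights) whose votes are weak orders each single-plateaued w.r.t. the axis `A`, the
weighted strict majority relation is transitive. -/
theorem singlePlateaued_majority_transitive
    {C : Type*} [Fintype C] (A : LinearOrder C)
    (V : List (ℕ × (C → C → Prop)))
    (hV : ∀ wv ∈ V, 0 < wv.1 ∧ IsWeakOrder wv.2 ∧ IsSinglePlateaued A wv.2)
    (a b c : C) (hab : a ≠ b) (hbc : b ≠ c) (hac : a ≠ c)
    (h1 : prefWeight V b a < prefWeight V a b)
    (h2 : prefWeight V c b < prefWeight V b c) :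
    prefWeight V c a < prefWeight V a c :=
  (singlePlateaued_majority_transitive_general A V fun wv hwv =>
    ⟨⟨(hV wv hwv).2.1.2⟩, (hV wv hwv).2.2⟩).trans a b c h1 h2
end

section
/- Let C be a nonempty finite set of candidates, L an axis on C, and V a finite weighted collection of voters (each with a positive integer weight) whose votes are weak orders on C, each single-plateaued with respect to L. Then a weak Condorcet winner exists: there is a candidate c such that for every candidate d ≠ c, the total weight of voters strictly preferring d to c is at most the total weight of voters strictly preferring c to d. -/
open scoped Classical

/-!
Against a rival `d` to the right of `c`, every supporter of `d` has its whole plateau to the right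
of `c`, and every voter whose plateau ends at or before `c` supports `c`; symmetrically on the left.
So it suffices that `c` is a median of the plateaus. Such a median is the first plateau endpoint at
which the weight of the plateaus wholly to the right does not exceed the weight of those already
ended: this is one of the two median inequalities, and its failure at the preceding endpoint is the
other.
-/

section Plateau

variable {C : Type*} [A : LinearOrder C] {v : C → C → Prop} {lo hi c d : C}

/-- The vote `v` is single-plateaued with plateau `[lo, hi]`, the segment `Y` of the decomposition
`X, Y, Z` of the axis. The axis is the ambient linear order. -/
structure IsPlateau (v : C → C → Prop) (lo hi : C) : Prop where
  le : lo ≤ hi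
  mem_Icc_iff : ∀ c, c ∈ Set.Icc lo hi ↔ TopCand v c
  increasing : ∀ a b, a < b → b ≤ lo → SPref v b a
  decreasing : ∀ a b, hi ≤ a → a < b → SPref v a b

theorem IsSinglePlateaued.exists_isPlateau (h : IsSinglePlateaued A v) :
    ∃ lo hi, IsPlateau v lo hi :=
  let ⟨lo, hi, hle, htop, hinc, hdec⟩ := h
  ⟨lo, hi, hle, htop, hinc, hdec⟩

theorem IsPlateau.notMem_Icc_of_sPref (h : IsPlateau v lo hi) (hdc : SPref v d c) :
    c ∉ Set.Icc lo hi :=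
  fun hc => hdc.2 ((h.mem_Icc_iff c).1 hc d)

theorem IsPlateau.hi_lt_of_sPref (h : IsPlateau v lo hi) (hlt : d < c) (hdc : SPref v d c) :
    hi < c := by
  have lo_lt : lo < c := not_le.1 fun hc => hdc.2 (h.increasing d c hlt hc).1
  exact not_le.1 fun hc => h.notMem_Icc_of_sPref hdc ⟨lo_lt.le, hc⟩

theorem IsPlateau.lt_lo_of_sPref (h : IsPlateau v lo hi) (hlt : c < d) (hdc : SPref v d c) :
    c < lo := by
  have lt_hi : c < hi := not_le.1 fun hc => hdc.2 (h.decreasing c d hc hlt).1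
  exact not_le.1 fun hc => h.notMem_Icc_of_sPref hdc ⟨hc, lt_hi.le⟩

end Plateau

section Median

variable {ι C β : Type*} [LinearOrder C] [LinearOrder β] {μ : Set ι → β}

theorem exists_interval_median_mem (hμ : Monotone μ) {E : Set C} (hE : E.Finite)
    (hne : E.Nonempty) {lo hi : ι → C} (hlo : ∀ i, lo i ∈ E) (hhi : ∀ i, hi i ∈ E) :
    ∃ c ∈ E, μ {i | c < lo i} ≤ μ {i | hi i ≤ c} ∧ μ {i | hi i < c} ≤ μ {i | c ≤ lo i} := by
  let S : Set C := {c ∈ E | μ {i | c < lo i} ≤ μ {i | hi i ≤ c}}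
  have hS : S.Nonempty := by
    obtain ⟨m, hmE, hm⟩ := E.exists_max_image id hE hne
    exact ⟨m, hmE, hμ fun i hlt => absurd hlt (hm _ (hlo i)).not_gt⟩
  obtain ⟨c, ⟨hcE, hc⟩, hcmin⟩ := S.exists_min_image id (hE.sep _) hS
  refine ⟨c, hcE, hc, ?_⟩
  rcases (E ∩ Set.Iio c).eq_empty_or_nonempty with hempty | hbelow
  · exact hμ fun i hlt => (Set.eq_empty_iff_forall_notMem.1 hempty _ ⟨hhi i, hlt⟩).elim
  · obtain ⟨b, ⟨hbE, hbc⟩, hbmax⟩ :=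
      (E ∩ Set.Iio c).exists_max_image id (hE.inter_of_left _) hbelow
    have hbS : μ {i | hi i ≤ b} < μ {i | b < lo i} :=
      not_le.1 fun hb => (hcmin b ⟨hbE, hb⟩).not_gt hbc
    calc μ {i | hi i < c} ≤ μ {i | hi i ≤ b} := hμ fun i hlt => hbmax _ ⟨hhi i, hlt⟩
      _ ≤ μ {i | b < lo i} := hbS.le
      _ ≤ μ {i | c ≤ lo i} := hμ fun i hblo =>
        not_lt.1 fun hloc => (hbmax _ ⟨hlo i, hloc⟩).not_gt hblo

theorem exists_interval_median [Finite ι] [Nonempty C] (hμ : Monotone μ) (lo hi : ι → C) :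
    ∃ c, μ {i | c < lo i} ≤ μ {i | hi i ≤ c} ∧ μ {i | hi i < c} ≤ μ {i | c ≤ lo i} := by
  obtain ⟨c₀⟩ := ‹Nonempty C›
  -- The point `c₀` only matters when there are no intervals.
  let E : Set C := insert c₀ (Set.range lo ∪ Set.range hi)
  have hE : E.Finite := ((Set.finite_range lo).union (Set.finite_range hi)).insert c₀
  obtain ⟨c, -, hc⟩ := exists_interval_median_mem hμ hE (Set.insert_nonempty _ _)
    (fun i => .inr (.inl ⟨i, rfl⟩)) (fun i => .inr (.inr ⟨i, rfl⟩))
  exact ⟨c, hc⟩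

theorem exists_weak_condorcet_winner_of_isPlateau [Finite ι] [Nonempty C] (hμ : Monotone μ)
    {vote : ι → C → C → Prop} {lo hi : ι → C} (h : ∀ i, IsPlateau (vote i) (lo i) (hi i)) :
    ∃ c, ∀ d, d ≠ c → μ {i | SPref (vote i) d c} ≤ μ {i | SPref (vote i) c d} := by
  obtain ⟨c, hright, hleft⟩ := exists_interval_median hμ lo hi
  refine ⟨c, fun d hdc => ?_⟩
  rcases hdc.lt_or_gt with hlt | hgt
  · calc μ {i | SPref (vote i) d c}
      _ ≤ μ {i | hi i < c} := hμ fun i hd => (h i).hi_lt_of_sPref hlt hd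
      _ ≤ μ {i | c ≤ lo i} := hleft
      _ ≤ μ {i | SPref (vote i) c d} := hμ fun i hle => (h i).increasing d c hlt hle
  · calc μ {i | SPref (vote i) d c}
      _ ≤ μ {i | c < lo i} := hμ fun i hd => (h i).lt_lo_of_sPref hgt hd
      _ ≤ μ {i | hi i ≤ c} := hright
      _ ≤ μ {i | SPref (vote i) c d} := hμ fun i hle => (h i).decreasing c d hle hgt

end Median

section Coalition

variable {X : Type*}

/-- The total weight of a coalition of voters of a weighted profile. Voters are identified by their
positions in the list, so that equal entries count as distinct voters. -/
noncomputable def coalitionWeight (V : List (ℕ × X)) (s : Set (Fin V.length)) : ℕ :=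
  ∑ i, s.indicator (fun i => V[i].1) i

theorem coalitionWeight_mono (V : List (ℕ × X)) : Monotone (coalitionWeight V) :=
  fun _ _ hst => Finset.sum_le_sum fun i _ =>
    Set.indicator_le_indicator_of_subset hst (fun _ => Nat.zero_le _) i

theorem prefWeight_eq_coalitionWeight (V : List (ℕ × (X → X → Prop))) (a b : X) :
    prefWeight V a b = coalitionWeight V {i | SPref V[i].2 a b} :=
  (Fin.sum_univ_fun_getElem V fun wv => if SPref wv.2 a b then wv.1 else 0).symm

end Coalition

theorem singlePlateaued_weak_condorcet_winner_exists_general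
    {C : Type*} [Nonempty C] (A : LinearOrder C) (V : List (ℕ × (C → C → Prop)))
    (hV : ∀ wv ∈ V, IsSinglePlateaued A wv.2) :
    ∃ c : C, ∀ d : C, d ≠ c → prefWeight V d c ≤ prefWeight V c d := by
  have hplateau (i : Fin V.length) : ∃ lo hi, IsPlateau V[i].2 lo hi :=
    (hV _ (List.getElem_mem i.isLt)).exists_isPlateau
  choose lo hi h using hplateau
  simpa only [prefWeight_eq_coalitionWeight] using
    exists_weak_condorcet_winner_of_isPlateau (coalitionWeight_mono V) h

/-- For a nonempty finite candidate set and a finite weighted collection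
`V` of voters (positive integer weights) whose votes are weak orders each
single-plateaued w.r.t. the axis `A`, a weak Condorcet winner exists. -/
theorem singlePlateaued_weak_condorcet_winner_exists
    {C : Type*} [Fintype C] [Nonempty C] (A : LinearOrder C)
    (V : List (ℕ × (C → C → Prop)))
    (hV : ∀ wv ∈ V, 0 < wv.1 ∧ IsWeakOrder wv.2 ∧ IsSinglePlateaued A wv.2) :
    ∃ c : C, ∀ d : C, d ≠ c → prefWeight V d c ≤ prefWeight V c d :=
  singlePlateaued_weak_condorcet_winner_exists_general A V fun wv h => (hV wv h).2.2
end

section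
/- Let the candidate set be C = {a_{m1}, ..., a_1, p, b_1, ..., b_{m2}} with m = m1 + m2 + 1 candidates, and let the axis be a_{m1} L ... L a_1 L p L b_1 L ... L b_{m2}, with m1 ≥ 1 and m2 ≥ 1. Let α = ⟨α1,...,αm⟩ be an m-candidate scoring vector such that for all i, j with 1 < i ≤ m1+1 and 1 < j ≤ m2+1 it holds that (α1 − αi)(α1 − αj) ≤ (αi − α_{i+1})(αj − α_{j+1}). Fix any one of the four scoring-rule extensions (min, max, round down, average). Then for every finite weighted collection S of voters whose votes are weak orders each single-plateaued with respect to L, either score_S(a_i) ≤ score_S(p) for all i with 1 ≤ i ≤ m1, or score_S(b_j) ≤ score_S(p) for all j with 1 ≤ j ≤ m2. -/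
open scoped Classical

/-!
Under each extension, a candidate's score is the average of `α` over a set of positions
(`scorePositions`).  Send position `i` to the pair `(α 1 - α i, α i - α (i + 1))`: what any rival
can gain at most on a candidate in position `i`, and what that candidate gains at least on
everybody below.  If `p` is not on the plateau of a vote, then one side of the axis lies below `p`
in strictly decreasing order.  This side leaves `p` only the first few positions, and the average
of their pairs bounds the gain of the other side and the loss of this one.  Summing over the
profile gives a pair `q` from the votes with the `b`s below `p` and a pair `r` from the votes with
the `a`s below `p`, such that the `a`s gain at most `q.1 - r.2` and the `b`s at most `r.1 - q.2`.
By bilinearity the hypothesis on `α` becomes `q.1 * r.1 ≤ q.2 * r.2`, so these two differences are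
not both positive.
-/

open scoped BigOperators Finset

section WeakOrder

variable {C : Type*} {v : C → C → Prop} {c d : C}

lemma IsWeakOrder.refl (hv : IsWeakOrder v) (c : C) : v c c :=
  (hv.1 c c).elim id id

lemma IsWeakOrder.sPref_of_sPref_of_pref (hv : IsWeakOrder v) {e : C} (hcd : SPref v c d)
    (hde : v d e) : SPref v c e :=
  ⟨hv.2 hcd.1 hde, fun hec => hcd.2 (hv.2 hde hec)⟩

lemma IsWeakOrder.sPref_of_pref_of_sPref (hv : IsWeakOrder v) {e : C} (hcd : v c d)
    (hde : SPref v d e) : SPref v c e :=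
  ⟨hv.2 hcd hde.1, fun hec => hde.2 (hv.2 hec hcd)⟩

variable [Fintype C]

lemma tiedCount_pos (hv : IsWeakOrder v) (c : C) : 0 < tiedCount v c := by
  have : Nonempty {d : C // Indiff v d c} := ⟨⟨c, hv.refl c, hv.refl c⟩⟩
  exact Nat.card_pos

lemma aboveCount_add_tiedCount (v : C → C → Prop) (c : C) :
    aboveCount v c + tiedCount v c = Set.ncard {d | v d c} := by
  have hdisj : Disjoint {d | SPref v d c} {d | Indiff v d c} :=
    Set.disjoint_left.2 fun d hd hd' => hd.2 hd'.2
  change Set.ncard {d | SPref v d c} + Set.ncard {d | Indiff v d c} = _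
  rw [← Set.ncard_union_eq hdisj]
  congr 1
  ext d
  simp only [SPref, Indiff, Set.mem_union, Set.mem_ofPred_eq]
  tauto

lemma aboveCount_add_tiedCount_le_aboveCount (hv : IsWeakOrder v) (h : SPref v c d) :
    aboveCount v c + tiedCount v c ≤ aboveCount v d := by
  rw [aboveCount_add_tiedCount]
  exact Set.ncard_le_ncard fun e he => hv.sPref_of_pref_of_sPref he h

lemma aboveCount_lt_aboveCount (hv : IsWeakOrder v) (h : SPref v c d) :
    aboveCount v c < aboveCount v d :=
  (Nat.lt_add_of_pos_right (tiedCount_pos hv c)).trans_le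
    (aboveCount_add_tiedCount_le_aboveCount hv h)

lemma classesBelow_lt_classesBelow (hv : IsWeakOrder v) (h : SPref v c d) :
    classesBelow v d < classesBelow v c := by
  refine Set.ncard_lt_ncard ((Set.ssubset_iff_of_subset ?_).2 ⟨aboveCount v d, ⟨d, h, rfl⟩, ?_⟩)
  · exact Set.image_mono fun e he => hv.sPref_of_sPref_of_pref h he.1
  · rintro ⟨e, he, hed⟩
    exact (aboveCount_lt_aboveCount hv he).ne' hed

lemma aboveCount_add_tiedCount_add_classesBelow_le (v : C → C → Prop) (c : C) :
    aboveCount v c + tiedCount v c + classesBelow v c ≤ Fintype.card C := by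
  have hdisj : Disjoint {d | v d c} {d | SPref v c d} :=
    Set.disjoint_left.2 fun d hd hd' => hd'.2 hd
  calc aboveCount v c + tiedCount v c + classesBelow v c
      ≤ Set.ncard {d | v d c} + Set.ncard {d | SPref v c d} := by
        rw [aboveCount_add_tiedCount]
        gcongr
        exact Set.ncard_image_le
    _ = Set.ncard ({d | v d c} ∪ {d | SPref v c d}) := (Set.ncard_union_eq hdisj).symm
    _ ≤ Fintype.card C := by
        rw [← Nat.card_eq_fintype_card]
        exact Set.ncard_le_card _

/-- The vote `v` ranks `p` strictly above all of `B`, and has no ties within `B`. This is what a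
single-plateaued vote does with the candidates beyond `p`, seen from its plateau. -/
def RanksStrictlyBelow (v : C → C → Prop) (p : C) (B : Finset C) : Prop :=
  (∀ b ∈ B, SPref v p b) ∧ (B : Set C).Pairwise fun b c => SPref v b c ∨ SPref v c b

lemma RanksStrictlyBelow.card_le_classesBelow (hv : IsWeakOrder v) {p : C} {B : Finset C}
    (hB : RanksStrictlyBelow v p B) : #B ≤ classesBelow v p := by
  have hinj : Set.InjOn (aboveCount v) (B : Set C) := fun b hb c hc hbc => by
    by_contra hne
    rcases hB.2 hb hc hne with h | h
    · exact (aboveCount_lt_aboveCount hv h).ne hbc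
    · exact (aboveCount_lt_aboveCount hv h).ne' hbc
  rw [← Set.ncard_coe_finset, ← hinj.ncard_image]
  exact Set.ncard_le_ncard (Set.image_mono hB.1)

end WeakOrder

lemma IsSinglePlateaued.topCand_or_ranksStrictlyBelow {C : Type*} [A : LinearOrder C]
    [LocallyFiniteOrderBot C] [LocallyFiniteOrderTop C] {v : C → C → Prop}
    (hv : IsSinglePlateaued A v) (p : C) :
    TopCand v p ∨ RanksStrictlyBelow v p (.Iio p) ∨ RanksStrictlyBelow v p (.Ioi p) := by
  obtain ⟨y₁, y₂, -, htop, hinc, hdec⟩ := hv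
  rcases lt_or_ge p y₁ with hp₁ | hp₁
  · refine .inr (.inl ⟨fun a ha => hinc a p (by simpa using ha) hp₁.le, fun a ha b hb hab => ?_⟩)
    simp only [Finset.coe_Iio, Set.mem_Iio] at ha hb
    exact hab.lt_or_gt.symm.imp (hinc b a · (ha.trans hp₁).le) (hinc a b · (hb.trans hp₁).le)
  rcases lt_or_ge y₂ p with hp₂ | hp₂
  · refine .inr (.inr ⟨fun b hb => hdec p b hp₂.le (by simpa using hb), fun a ha b hb hab => ?_⟩)
    simp only [Finset.coe_Ioi, Set.mem_Ioi] at ha hb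
    exact hab.lt_or_gt.imp (hdec a b (hp₂.trans ha).le) (hdec b a (hp₂.trans hb).le)
  · exact .inl ((htop p).1 ⟨hp₁, hp₂⟩)

section Score

variable {C : Type*} [Fintype C] {v : C → C → Prop} {c d p : C} {α : ℕ → ℕ} {E : ScoreExt}
  {i j : ℕ}

/-- The positions whose average `α`-value is the score of `c` in the vote `v` under the
extension `E`. -/
noncomputable def scorePositions (E : ScoreExt) (v : C → C → Prop) (c : C) : Finset ℕ :=
  match E with
  | .emin => {aboveCount v c + tiedCount v c}
  | .emax => {aboveCount v c + 1}
  | .eroundDown => {Fintype.card C - classesBelow v c}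
  | .eaverage => .Icc (aboveCount v c + 1) (aboveCount v c + tiedCount v c)

lemma extScore_eq_expect (α : ℕ → ℕ) (E : ScoreExt) (v : C → C → Prop) (c : C) :
    extScore (Fintype.card C) α E v c = 𝔼 i ∈ scorePositions E v c, (α i : ℚ) := by
  cases E <;> simp [extScore, scorePositions, Finset.expect_eq_sum_div_card]

lemma scorePositions_nonempty (hv : IsWeakOrder v) (E : ScoreExt) (c : C) :
    (scorePositions E v c).Nonempty := by
  have := tiedCount_pos hv c
  cases E <;> simp only [scorePositions, Finset.singleton_nonempty, Finset.nonempty_Icc]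
  omega

lemma scorePositions_congr (hv : IsWeakOrder v) (h : Indiff v c d) (E : ScoreExt) :
    scorePositions E v c = scorePositions E v d := by
  have hl (e : C) : v e c ↔ v e d := ⟨(hv.2 · h.1), (hv.2 · h.2)⟩
  have hr (e : C) : v c e ↔ v d e := ⟨hv.2 h.2, hv.2 h.1⟩
  simp only [scorePositions, aboveCount, tiedCount, classesBelow, SPref, Indiff, hl, hr]

lemma one_le_of_mem_scorePositions (hv : IsWeakOrder v) (hi : i ∈ scorePositions E v c) :
    1 ≤ i := by
  have := tiedCount_pos hv c
  have := aboveCount_add_tiedCount_add_classesBelow_le v c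
  cases E <;> simp only [scorePositions, Finset.mem_singleton, Finset.mem_Icc] at hi <;> omega

lemma add_classesBelow_le_of_mem_scorePositions (hv : IsWeakOrder v)
    (hi : i ∈ scorePositions E v c) : i + classesBelow v c ≤ Fintype.card C := by
  have := tiedCount_pos hv c
  have := aboveCount_add_tiedCount_add_classesBelow_le v c
  cases E <;> simp only [scorePositions, Finset.mem_singleton, Finset.mem_Icc] at hi <;> omega

lemma lt_of_mem_scorePositions (hv : IsWeakOrder v) (h : SPref v c d)
    (hi : i ∈ scorePositions E v c) (hj : j ∈ scorePositions E v d) : i < j := by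
  have := tiedCount_pos hv c
  have := tiedCount_pos hv d
  have := aboveCount_add_tiedCount_le_aboveCount hv h
  have := classesBelow_lt_classesBelow hv h
  have := aboveCount_add_tiedCount_add_classesBelow_le v c
  cases E <;> simp only [scorePositions, Finset.mem_singleton, Finset.mem_Icc] at hi hj <;> omega

lemma extScore_le_of_forall_le (hα : IsScoringVec (Fintype.card C) α) (hv : IsWeakOrder v)
    (hi : 1 ≤ i) (h : ∀ j ∈ scorePositions E v c, i ≤ j) :
    extScore (Fintype.card C) α E v c ≤ α i := by
  rw [extScore_eq_expect]
  refine Finset.expect_le (scorePositions_nonempty hv E c) fun j hj => ?_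
  have := add_classesBelow_le_of_mem_scorePositions hv hj
  exact_mod_cast hα i j hi (h j hj) (by omega)

lemma extScore_le_one (hα : IsScoringVec (Fintype.card C) α) (hv : IsWeakOrder v) (E : ScoreExt)
    (c : C) : extScore (Fintype.card C) α E v c ≤ α 1 :=
  extScore_le_of_forall_le hα hv le_rfl fun _ => one_le_of_mem_scorePositions hv

lemma extScore_le_succ_of_sPref (hα : IsScoringVec (Fintype.card C) α) (hv : IsWeakOrder v)
    (h : SPref v c d) (hi : i ∈ scorePositions E v c) :
    extScore (Fintype.card C) α E v d ≤ α (i + 1) :=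
  extScore_le_of_forall_le hα hv (Nat.le_add_left 1 i) fun _ => lt_of_mem_scorePositions hv h hi

lemma extScore_le_extScore (hα : IsScoringVec (Fintype.card C) α) (hv : IsWeakOrder v)
    (E : ScoreExt) (h : v c d) :
    extScore (Fintype.card C) α E v d ≤ extScore (Fintype.card C) α E v c := by
  by_cases hdc : v d c
  · rw [extScore_eq_expect, extScore_eq_expect, scorePositions_congr hv ⟨h, hdc⟩]
  · rw [extScore_eq_expect _ _ _ c]
    refine Finset.le_expect (scorePositions_nonempty hv E c) fun i hi => ?_
    exact extScore_le_of_forall_le hα hv (one_le_of_mem_scorePositions hv hi)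
      fun j hj => (lt_of_mem_scorePositions hv ⟨h, hdc⟩ hi hj).le

end Score

section Trade

/-- Bounds for a candidate in position `i`: any rival outscores it by at most the first component,
and it outscores any rival below it by at least the second. -/
def trade (α : ℕ → ℕ) (i : ℕ) : ℚ × ℚ :=
  ((α 1 : ℚ) - α i, (α i : ℚ) - α (i + 1))

/-- The nonnegative rational combinations of the trades in the first `n` positions. -/
def tradeCone (α : ℕ → ℕ) (n : ℕ) : Submodule ℚ≥0 (ℚ × ℚ) :=
  .span ℚ≥0 (trade α '' Set.Icc 1 n)

variable {α : ℕ → ℕ} {m n n' : ℕ} {q r : ℚ × ℚ}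

lemma IsScoringVec.trade_nonneg (hα : IsScoringVec m α) {i : ℕ} (hi : 1 ≤ i) (him : i < m) :
    0 ≤ trade α i :=
  Prod.mk_le_mk.2 ⟨sub_nonneg.2 (by exact_mod_cast hα 1 i le_rfl hi him.le),
    sub_nonneg.2 (by exact_mod_cast hα i (i + 1) hi i.le_succ him)⟩

lemma IsScoringVec.nonneg_of_mem_tradeCone (hα : IsScoringVec m α) (hn : n < m)
    (hq : q ∈ tradeCone α n) : 0 ≤ q := by
  induction hq using Submodule.span_induction with
  | mem q hq =>
    obtain ⟨i, hi, rfl⟩ := hq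
    exact hα.trade_nonneg hi.1 (hi.2.trans_lt hn)
  | zero => exact le_rfl
  | add q r _ _ hq hr => exact add_nonneg hq hr
  | smul c q _ hq => exact smul_nonneg zero_le hq

lemma fst_mul_fst_le_snd_mul_snd_of_mem_span {s t : Set (ℚ × ℚ)}
    (h : ∀ q ∈ s, ∀ r ∈ t, q.1 * r.1 ≤ q.2 * r.2)
    (hq : q ∈ Submodule.span ℚ≥0 s) (hr : r ∈ Submodule.span ℚ≥0 t) :
    q.1 * r.1 ≤ q.2 * r.2 := by
  induction hq, hr using Submodule.span_induction₂ with
  | mem_mem q r hq hr => exact h q hq r hr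
  | zero_left r => simp
  | zero_right q => simp
  | add_left q q' r _ _ _ h h' =>
    simpa only [Prod.fst_add, Prod.snd_add, add_mul] using add_le_add h h'
  | add_right q r r' _ _ _ h h' =>
    simpa only [Prod.fst_add, Prod.snd_add, mul_add] using add_le_add h h'
  | smul_left c q r _ _ h =>
    simpa only [Prod.smul_fst, Prod.smul_snd, smul_mul_assoc] using
      smul_le_smul_of_nonneg_left h zero_le
  | smul_right c q r _ _ h =>
    simpa only [Prod.smul_fst, Prod.smul_snd, mul_smul_comm] using
      smul_le_smul_of_nonneg_left h zero_le

lemma IsScoringVec.fst_mul_fst_le_snd_mul_snd_of_mem_tradeCone (hα : IsScoringVec m α)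
    (hn : n < m) (hn' : n' < m)
    (hcond : ∀ i j : ℕ, 1 < i → i ≤ n → 1 < j → j ≤ n' →
      (α 1 - α i) * (α 1 - α j) ≤ (α i - α (i + 1)) * (α j - α (j + 1)))
    (hq : q ∈ tradeCone α n) (hr : r ∈ tradeCone α n') : q.1 * r.1 ≤ q.2 * r.2 := by
  have hcast {i : ℕ} (hi : 1 ≤ i) (him : i < m) :
      trade α i = (((α 1 - α i : ℕ) : ℚ), ((α i - α (i + 1) : ℕ) : ℚ)) := by
    rw [trade, Nat.cast_sub (hα 1 i le_rfl hi him.le), Nat.cast_sub (hα i (i + 1) hi i.le_succ him)]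
  refine fst_mul_fst_le_snd_mul_snd_of_mem_span ?_ hq hr
  rintro _ ⟨i, hi, rfl⟩ _ ⟨j, hj, rfl⟩
  rw [hcast hi.1 (hi.2.trans_lt hn), hcast hj.1 (hj.2.trans_lt hn')]
  rcases hi.1.eq_or_lt with rfl | hi'
  · simpa using by positivity
  rcases hj.1.eq_or_lt with rfl | hj'
  · simpa using by positivity
  dsimp only
  exact_mod_cast hcond i j hi' hi.2 hj' hj.2

variable {C : Type*} [Fintype C] {v : C → C → Prop} {p : C} {A B : Finset C}

lemma RanksStrictlyBelow.exists_mem_tradeCone (hα : IsScoringVec (Fintype.card C) α)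
    (hv : IsWeakOrder v) (E : ScoreExt) (hB : RanksStrictlyBelow v p B) :
    ∃ q ∈ tradeCone α (Fintype.card C - #B),
      (∀ c, extScore (Fintype.card C) α E v c - extScore (Fintype.card C) α E v p ≤ q.1) ∧
      ∀ b ∈ B, extScore (Fintype.card C) α E v b - extScore (Fintype.card C) α E v p ≤ -q.2 := by
  have hne := scorePositions_nonempty hv E p
  refine ⟨𝔼 i ∈ scorePositions E v p, trade α i, ?_, fun c => ?_, fun b hb => ?_⟩
  · refine Submodule.smul_mem _ _ (Submodule.sum_mem _ fun i hi => Submodule.subset_span ?_)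
    have := add_classesBelow_le_of_mem_scorePositions hv hi
    have := hB.card_le_classesBelow hv
    exact ⟨i, ⟨one_le_of_mem_scorePositions hv hi, by omega⟩, rfl⟩
  · have hfst : (𝔼 i ∈ scorePositions E v p, trade α i).1 =
        α 1 - extScore (Fintype.card C) α E v p := by
      rw [← LinearMap.fst_apply (R := ℚ≥0), map_expect, extScore_eq_expect]
      simp only [LinearMap.fst_apply, trade, Finset.expect_sub_distrib, Finset.expect_const hne]
    rw [hfst]
    gcongr
    exact extScore_le_one hα hv E c
  · have hsnd : (𝔼 i ∈ scorePositions E v p, trade α i).2 =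
        extScore (Fintype.card C) α E v p - 𝔼 i ∈ scorePositions E v p, (α (i + 1) : ℚ) := by
      rw [← LinearMap.snd_apply (R := ℚ≥0), map_expect, extScore_eq_expect]
      simp only [LinearMap.snd_apply, trade, Finset.expect_sub_distrib]
    rw [hsnd, neg_sub]
    gcongr
    exact Finset.le_expect hne fun i hi => extScore_le_succ_of_sPref hα hv (hB.1 b hb) hi

/-- The score functions whose advantages over `p` on `A` and on `B` are bounded by two trades, one
from votes ranking `B` below `p` and one from votes ranking `A` below `p`.  A submonoid, since a
profile's score function is a sum over its votes. -/
def tradeBounded (α : ℕ → ℕ) (p : C) (A B : Finset C) : AddSubmonoid (C → ℚ) where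
  carrier := {f | ∃ q ∈ tradeCone α (Fintype.card C - #B), ∃ r ∈ tradeCone α (Fintype.card C - #A),
    (∀ a ∈ A, f a - f p ≤ q.1 - r.2) ∧ ∀ b ∈ B, f b - f p ≤ r.1 - q.2}
  zero_mem' := ⟨0, zero_mem _, 0, zero_mem _, by simp, by simp⟩
  add_mem' := by
    rintro f g ⟨q, hq, r, hr, hA, hB⟩ ⟨q', hq', r', hr', hA', hB'⟩
    refine ⟨q + q', add_mem hq hq', r + r', add_mem hr hr', fun a ha => ?_, fun b hb => ?_⟩
    · simp only [Pi.add_apply, Prod.fst_add, Prod.snd_add]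
      linarith [hA a ha, hA' a ha]
    · simp only [Pi.add_apply, Prod.fst_add, Prod.snd_add]
      linarith [hB b hb, hB' b hb]

lemma extScore_mem_tradeBounded (hα : IsScoringVec (Fintype.card C) α) (hv : IsWeakOrder v)
    (E : ScoreExt)
    (hp : TopCand v p ∨ RanksStrictlyBelow v p A ∨ RanksStrictlyBelow v p B) :
    extScore (Fintype.card C) α E v ∈ tradeBounded α p A B := by
  rcases hp with hp | hA | hB
  · refine ⟨0, zero_mem _, 0, zero_mem _, fun a _ => ?_, fun b _ => ?_⟩
    · simpa using extScore_le_extScore hα hv E (hp a)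
    · simpa using extScore_le_extScore hα hv E (hp b)
  · obtain ⟨r, hr, hgain, hloss⟩ := hA.exists_mem_tradeCone hα hv E
    exact ⟨0, zero_mem _, r, hr, by simpa using hloss, by simpa using fun b _ => hgain b⟩
  · obtain ⟨q, hq, hgain, hloss⟩ := hB.exists_mem_tradeCone hα hv E
    exact ⟨q, hq, 0, zero_mem _, by simpa using fun a _ => hgain a, by simpa using hloss⟩

lemma profScore_eq_sum_nsmul (m : ℕ) (α : ℕ → ℕ) (E : ScoreExt) (S : List (ℕ × (C → C → Prop))) :
    profScore m α E S = (S.map fun wv => wv.1 • extScore m α E wv.2).sum := by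
  induction S with
  | nil => rfl
  | cons wv S ih =>
    ext c
    rw [List.map_cons, List.sum_cons, ← ih]
    simp [profScore]

lemma profScore_mem_tradeBounded (hα : IsScoringVec (Fintype.card C) α) (E : ScoreExt)
    {S : List (ℕ × (C → C → Prop))}
    (hS : ∀ wv ∈ S, IsWeakOrder wv.2 ∧
      (TopCand wv.2 p ∨ RanksStrictlyBelow wv.2 p A ∨ RanksStrictlyBelow wv.2 p B)) :
    profScore (Fintype.card C) α E S ∈ tradeBounded α p A B := by
  rw [profScore_eq_sum_nsmul]
  refine list_sum_mem fun f hf => ?_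
  obtain ⟨wv, hwv, rfl⟩ := List.mem_map.1 hf
  exact nsmul_mem (extScore_mem_tradeBounded hα (hS wv hwv).1 E (hS wv hwv).2) wv.1

end Trade

theorem singlePlateaued_one_side_bounded_by_p_general {C : Type*} [Fintype C] {α : ℕ → ℕ}
    (hα : IsScoringVec (Fintype.card C) α) {p : C} {A B : Finset C}
    (hcond : ∀ i j : ℕ, 1 < i → i ≤ Fintype.card C - #B → 1 < j → j ≤ Fintype.card C - #A →
      (α 1 - α i) * (α 1 - α j) ≤ (α i - α (i + 1)) * (α j - α (j + 1)))
    (E : ScoreExt) {S : List (ℕ × (C → C → Prop))}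
    (hS : ∀ wv ∈ S, IsWeakOrder wv.2 ∧
      (TopCand wv.2 p ∨ RanksStrictlyBelow wv.2 p A ∨ RanksStrictlyBelow wv.2 p B)) :
    (∀ a ∈ A, profScore (Fintype.card C) α E S a ≤ profScore (Fintype.card C) α E S p) ∨
    ∀ b ∈ B, profScore (Fintype.card C) α E S b ≤ profScore (Fintype.card C) α E S p := by
  obtain ⟨q, hq, r, hr, hA, hB⟩ := profScore_mem_tradeBounded hα E hS
  by_contra! hcon
  obtain ⟨⟨a, ha, hpa⟩, b, hb, hpb⟩ := hcon
  have hcard {D : Finset C} {d : C} (hd : d ∈ D) : Fintype.card C - #D < Fintype.card C :=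
    Nat.sub_lt (Fintype.card_pos_iff.2 ⟨d⟩) (Finset.card_pos.2 ⟨d, hd⟩)
  have hq₀ : 0 ≤ q.2 := (hα.nonneg_of_mem_tradeCone (hcard hb) hq).2
  have hr₀ : 0 ≤ r.2 := (hα.nonneg_of_mem_tradeCone (hcard ha) hr).2
  have hrq : r.2 < q.1 := by linarith [hA a ha]
  have hqr : q.2 < r.1 := by linarith [hB b hb]
  refine (mul_lt_mul'' hrq hqr hr₀ hq₀).not_ge ?_
  rw [mul_comm r.2]
  exact hα.fst_mul_fst_le_snd_mul_snd_of_mem_tradeCone (hcard hb) (hcard ha) hcond hq hr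

/-- Candidates are `Fin m` with `m = m1 + m2 + 1`, the axis is the natural
order on `Fin m`, the preferred candidate `p` is at axis position `m1`, candidate `a_i`
is at position `m1 - i` (for `1 ≤ i ≤ m1`) and `b_j` at position `m1 + j` (for
`1 ≤ j ≤ m2`).  If the scoring vector `α` satisfies
`(α 1 - α i)(α 1 - α j) ≤ (α i - α (i+1))(α j - α (j+1))` for all `1 < i ≤ m1 + 1` and
`1 < j ≤ m2 + 1`, then for every weighted profile `S` of single-plateaued weak orders,
either every `a_i` scores at most `p`, or every `b_j` scores at most `p` (for any of
the four scoring-rule extensions). -/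
theorem singlePlateaued_one_side_bounded_by_p
    (m1 m2 m : ℕ) (hm1 : 1 ≤ m1) (hm2 : 1 ≤ m2) (hm : m = m1 + m2 + 1)
    (α : ℕ → ℕ) (hα : IsScoringVec m α)
    (hcond : ∀ i j : ℕ, 1 < i → i ≤ m1 + 1 → 1 < j → j ≤ m2 + 1 →
      (α 1 - α i) * (α 1 - α j) ≤ (α i - α (i + 1)) * (α j - α (j + 1)))
    (E : ScoreExt)
    (S : List (ℕ × (Fin m → Fin m → Prop)))
    (hS : ∀ wv ∈ S, 0 < wv.1 ∧ IsWeakOrder wv.2 ∧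
      IsSinglePlateaued (inferInstance : LinearOrder (Fin m)) wv.2) :
    (∀ i : ℕ, ∀ _hi1 : 1 ≤ i, ∀ _hi2 : i ≤ m1,
      profScore m α E S (⟨m1 - i, by omega⟩ : Fin m) ≤
        profScore m α E S (⟨m1, by omega⟩ : Fin m)) ∨
    (∀ j : ℕ, ∀ _hj1 : 1 ≤ j, ∀ _hj2 : j ≤ m2,
      profScore m α E S (⟨m1 + j, by omega⟩ : Fin m) ≤
        profScore m α E S (⟨m1, by omega⟩ : Fin m)) := by
  have h := singlePlateaued_one_side_bounded_by_p_general (C := Fin m) (p := ⟨m1, by omega⟩)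
    (A := .Iio ⟨m1, by omega⟩) (B := .Ioi ⟨m1, by omega⟩) (by simpa using hα)
    (by simpa [show m - (m - 1 - m1) = m1 + 1 by omega, show m - m1 = m2 + 1 by omega] using hcond)
    E fun wv hwv => ⟨(hS wv hwv).2.1, (hS wv hwv).2.2.topCand_or_ranksStrictlyBelow _⟩
  simp only [Fintype.card_fin, Finset.mem_Iio, Finset.mem_Ioi] at h
  exact h.imp (fun h i _ _ => h _ (Fin.mk_lt_mk.2 (by omega)))
    fun h j _ _ => h _ (Fin.mk_lt_mk.2 (by omega))
end

section
/- Let C be a finite set of candidates with |C| ≥ 2, L an axis on C, and v a weak order on C that is single-plateaued with respect to L and has at least two indifference classes. Then the least-preferred indifference class of v is a subset of {the L-minimum candidate of C, the L-maximum candidate of C}. In particular this holds for every weak order single-peaked with respect to L. -/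
open scoped Classical

section BottomClass

variable {C : Type*} {v : C → C → Prop} {c : C}

/-- `c` is in the least-preferred indifference class of `v`; the dual of `TopCand`, likewise
stated for an arbitrary relation `v`. It marks the candidates to be located on the axis. -/
def BottomCand (v : C → C → Prop) (c : C) : Prop := ∀ d, v d c

theorem IsWeakOrder.isTrans (hv : IsWeakOrder v) : IsTrans C v :=
  ⟨fun _ _ _ hab hbc => hv.2 hab hbc⟩

theorem BottomCand.not_sPref (hc : BottomCand v c) (d : C) : ¬ SPref v c d :=
  fun hcd => hcd.2 (hc d)

theorem BottomCand.rel_of_topCand [IsTrans C v] (hbot : BottomCand v c) (htop : TopCand v c)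
    (x y : C) : v x y :=
  _root_.trans (hbot x) (htop y)

variable [A : LinearOrder C]

theorem BottomCand.isBot_of_increasing (hc : BottomCand v c) {y : C}
    (hinc : ∀ a b, a < b → b ≤ y → SPref v b a) (hcy : c ≤ y) : IsBot c :=
  fun d => not_lt.mp fun hdc => hc.not_sPref d (hinc d c hdc hcy)

theorem BottomCand.isTop_of_decreasing (hc : BottomCand v c) {y : C}
    (hdec : ∀ a b, y ≤ a → a < b → SPref v a b) (hyc : y ≤ c) : IsTop c :=
  fun d => not_lt.mp fun hcd => hc.not_sPref d (hdec c d hyc hcd)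

theorem BottomCand.isBot_or_isTop_or_mem_Ioo (hc : BottomCand v c) {y₁ y₂ : C}
    (hinc : ∀ a b, a < b → b ≤ y₁ → SPref v b a)
    (hdec : ∀ a b, y₂ ≤ a → a < b → SPref v a b) :
    IsBot c ∨ IsTop c ∨ c ∈ Set.Ioo y₁ y₂ := by
  rcases le_or_gt c y₁ with hcy | hyc
  · exact .inl (hc.isBot_of_increasing hinc hcy)
  rcases le_or_gt y₂ c with hyc' | hcy
  · exact .inr (.inl (hc.isTop_of_decreasing hdec hyc'))
  · exact .inr (.inr ⟨hyc, hcy⟩)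

theorem IsSinglePlateaued.isBot_or_isTop_of_bottomCand [IsTrans C v]
    (hv : IsSinglePlateaued A v) (hne : ∃ x y, SPref v x y) (hc : BottomCand v c) :
    IsBot c ∨ IsTop c := by
  obtain ⟨y₁, y₂, -, hplateau, hinc, hdec⟩ := hv
  obtain ⟨x, y, -, hyx⟩ := hne
  have not_mem_plateau : c ∉ Set.Icc y₁ y₂ := fun hmem =>
    hyx (hc.rel_of_topCand ((hplateau c).mp hmem) y x)
  exact (hc.isBot_or_isTop_or_mem_Ioo hinc hdec).imp_right
    (Or.resolve_right · fun hmem => not_mem_plateau (Set.Ioo_subset_Icc_self hmem))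

theorem IsSinglePeaked.isBot_or_isTop_of_bottomCand (hv : IsSinglePeaked A v)
    (hc : BottomCand v c) : IsBot c ∨ IsTop c := by
  obtain ⟨p, hinc, hdec⟩ := hv
  simpa only [Set.Ioo_self, Set.mem_empty_iff_false, or_false] using
    hc.isBot_or_isTop_or_mem_Ioo hinc hdec

end BottomClass

theorem singlePlateaued_bottom_class_at_axis_ends_general {C : Type*} (A : LinearOrder C) :
    (∀ v : C → C → Prop, IsTrans C v → IsSinglePlateaued A v → (∃ x y, SPref v x y) →
      ∀ c, BottomCand v c → IsBot c ∨ IsTop c) ∧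
    (∀ v : C → C → Prop, IsSinglePeaked A v → ∀ c, BottomCand v c → IsBot c ∨ IsTop c) :=
  ⟨fun _ _ hv hne _ hc => hv.isBot_or_isTop_of_bottomCand hne hc,
    fun _ hv _ hc => hv.isBot_or_isTop_of_bottomCand hc⟩

/-- For a finite candidate set with at least two candidates, an axis `A`,
and a weak order `v` that is single-plateaued w.r.t. `A` and has at least two
indifference classes (i.e., some candidate is strictly preferred to some other), every
candidate in the least-preferred indifference class is the `A`-minimum or the
`A`-maximum of the candidate set.  In particular this holds for every weak order that
is single-peaked w.r.t. `A`. -/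
theorem singlePlateaued_bottom_class_at_axis_ends
    {C : Type*} [Fintype C] (h2 : 2 ≤ Fintype.card C) (A : LinearOrder C) :
    (∀ v : C → C → Prop, IsWeakOrder v → IsSinglePlateaued A v →
      (∃ x y : C, SPref v x y) →
      ∀ c : C, (∀ d, v d c) → (∀ d, A.le c d) ∨ (∀ d, A.le d c)) ∧
    (∀ v : C → C → Prop, IsWeakOrder v → IsSinglePeaked A v →
      (∃ x y : C, SPref v x y) →
      ∀ c : C, (∀ d, v d c) → (∀ d, A.le c d) ∨ (∀ d, A.le d c)) := by
  obtain ⟨plateaued, peaked⟩ := singlePlateaued_bottom_class_at_axis_ends_general A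
  exact ⟨fun v hv => plateaued v hv.isTrans, fun v _ hpeak _ => peaked v hpeak⟩
end

section
/- Let C be a finite set of m candidates and L an axis on C. Let c_1, c_2, ..., c_m be an enumeration of C such that for every i, the candidate c_i is either the L-minimum or the L-maximum of the set {c_i, c_{i+1}, ..., c_m}. Then the total order c_m > c_{m−1} > ... > c_1 (the reverse of the elimination order) is single-peaked with respect to L. -/
open scoped Classical

/-!
A candidate strictly between two others is neither the minimum nor the maximum of any set containing
all three, so it is not eliminated before both of them. Take the last survivor as the peak: any
candidate strictly between `a` and the peak must then outlive `a`, since it does not outlive the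
peak.
-/

section EliminationOrder

variable {ι C : Type*}

/-- A family `e` of candidates, listed in order of elimination, is an elimination order if each
`e i` is a minimum or a maximum of the candidates `e j`, `i ≤ j`, not eliminated before it. The
order on `C` is the axis; the index type is arbitrary, so infinite families are allowed. -/
def IsEliminationOrder [LE ι] [LE C] (e : ι → C) : Prop :=
  ∀ i, (∀ j, i ≤ j → e i ≤ e j) ∨ (∀ j, i ≤ j → e j ≤ e i)

namespace IsEliminationOrder

variable [LinearOrder C] {e : ι → C}

theorem eq_or_eq_of_mem_uIcc [LE ι] (he : IsEliminationOrder e) {i j k : ι}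
    (hji : j ≤ i) (hjk : j ≤ k) (hj : e j ∈ Set.uIcc (e i) (e k)) : e j = e i ∨ e j = e k := by
  rcases he j with hmin | hmax <;> rcases Set.mem_uIcc.1 hj with ⟨hij, hjk'⟩ | ⟨hkj, hji'⟩
  · exact .inl ((hmin i hji).antisymm hij)
  · exact .inr ((hmin k hjk).antisymm hkj)
  · exact .inr (hjk'.antisymm (hmax k hjk))
  · exact .inl (hji'.antisymm (hmax i hji))

theorem lt_of_mem_uIcc_top [LinearOrder ι] [OrderTop ι] (he : IsEliminationOrder e)
    (hinj : Function.Injective e) {i j : ι} (hij : i ≠ j) (hj : e j ∈ Set.uIcc (e i) (e ⊤)) :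
    i < j := by
  by_contra! hji
  rcases he.eq_or_eq_of_mem_uIcc hji le_top hj with h | h
  · exact hij (hinj h).symm
  · have hj_top : j = ⊤ := hinj h
    exact hij (le_antisymm (hj_top ▸ le_top) hji)

end IsEliminationOrder

theorem reverse_elimination_order_singlePeaked_general [LinearOrder ι] [OrderTop ι]
    (A : LinearOrder C) (e : ι ≃ C) (he : IsEliminationOrder e) :
    IsSinglePeaked A (fun x y => e.symm y ≤ e.symm x) := by
  have outlives {a b : C} (hab : a ≠ b) (hb : b ∈ Set.uIcc a (e ⊤)) :
      SPref (fun x y => e.symm y ≤ e.symm x) b a :=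
    lt_iff_le_not_ge.1 <|
      he.lt_of_mem_uIcc_top e.injective (e.symm.injective.ne hab) (by simpa using hb)
  exact ⟨e ⊤, fun _ _ hab hbp => outlives hab.ne (Set.mem_uIcc_of_le hab.le hbp),
    fun _ _ hpa hab => outlives hab.ne' (Set.mem_uIcc_of_ge hpa hab.le)⟩

end EliminationOrder

/-- Let `e : Fin m ≃ C` enumerate the `m ≥ 1` candidates so that for
every `i`, candidate `e i` is the `A`-minimum or the `A`-maximum of
`{e i, e (i+1), ..., e (m-1)}` (an elimination order).  Then the total order ranking
`e (m-1) > e (m-2) > ... > e 0` (the reverse of the elimination order) is single-peaked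
w.r.t. the axis `A`. -/
theorem reverse_elimination_order_singlePeaked
    {C : Type*} [Fintype C] (A : LinearOrder C) (m : ℕ) (hm : m = Fintype.card C)
    (hm1 : 1 ≤ m) (e : Fin m ≃ C)
    (helim : ∀ i : Fin m,
      (∀ j : Fin m, i ≤ j → A.le (e i) (e j)) ∨ (∀ j : Fin m, i ≤ j → A.le (e j) (e i))) :
    IsSinglePeaked A (fun x y => e.symm y ≤ e.symm x) := by
  have : NeZero m := ⟨Nat.one_le_iff_ne_zero.1 hm1⟩
  exact reverse_elimination_order_singlePeaked_general A e helim
end
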